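/- arXiv:2501.11565 — 5 statements merged into one kernel-verified Lean document; each statement's English description precedes it below -/
import Mathlib

section
/- Let x ∈ ℝ³ \ {0} and let u : ℝ³ → ℝ³ be differentiable at ι(x) = x/|x|². Then u∘ι is differentiable at x with Jacobian D(u∘ι)(x) = (1/|x|²)·Du(ι(x))·A(x), where A(x) = I₃ − 2·x xᵀ/|x|²; consequently the squared Frobenius norms satisfy ‖D(u∘ι)(x)‖² = ‖Du(ι(x))‖²/|x|⁴. -/
/-!
The derivative of the inversion in the sphere of centre `c` and radius `R` at `x` is
`(R / |x - c|)²` times the reflection in the hyperplane orthogonal to `x - c`, whose matrix is the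
Householder matrix of `x - c`. The chain rule then gives the Jacobian of `u ∘ ι`, and since the
Householder matrix is orthogonal, multiplying by it does not change the Frobenius norm.
-/

noncomputable section

open Real

/-- `ℝ³` with the Euclidean norm. -/
abbrev E3 := EuclideanSpace ℝ (Fin 3)

/-- Jacobian matrix of a map `f : ℝ³ → ℝ³` at `x`. -/
def jac (f : E3 → E3) (x : E3) : Matrix (Fin 3) (Fin 3) ℝ :=
  Matrix.of fun i j => fderiv ℝ f x (EuclideanSpace.single j 1) i

/-- Squared Frobenius norm of the Jacobian of `f` at `x`. -/
def frobSq (f : E3 → E3) (x : E3) : ℝ := ∑ i, ∑ j, (jac f x i j) ^ 2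

/-- Inversion about the unit sphere, `ι(x) = x / |x|²`. -/
def sphereInv (x : E3) : E3 := (‖x‖ ^ 2)⁻¹ • x

/-- The matrix `A(x) = I₃ − 2 x xᵀ / |x|²`. -/
def Amat (x : E3) : Matrix (Fin 3) (Fin 3) ℝ :=
  Matrix.of fun i j => (if i = j then (1 : ℝ) else 0) - 2 * x i * x j / ‖x‖ ^ 2

section FrobeniusNorm

open scoped Matrix Matrix.Norms.Frobenius

variable {m n 𝕜 : Type*} [Fintype m] [Fintype n] [RCLike 𝕜]

theorem frobenius_norm_sq_eq_sum (A : Matrix m n 𝕜) : ‖A‖ ^ 2 = ∑ i, ∑ j, ‖A i j‖ ^ 2 := by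
  have hsum : 0 ≤ ∑ i, ∑ j, ‖A i j‖ ^ 2 := by positivity
  simp only [Matrix.frobenius_norm_def, rpow_two, ← sqrt_eq_rpow, sq_sqrt hsum]

theorem frobenius_norm_sq_eq_trace (A : Matrix m n 𝕜) : (‖A‖ ^ 2 : 𝕜) = (A * Aᴴ).trace := by
  rw [← RCLike.ofReal_pow, frobenius_norm_sq_eq_sum]
  simp [Matrix.trace, Matrix.mul_apply, RCLike.mul_conj]

theorem frobenius_norm_mul_of_mem_unitaryGroup [DecidableEq n] (A : Matrix m n 𝕜)
    {U : Matrix n n 𝕜} (hU : U ∈ Matrix.unitaryGroup n 𝕜) : ‖A * U‖ = ‖A‖ := by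
  have hmul : A * U * (A * U)ᴴ = A * Aᴴ := by
    rw [Matrix.conjTranspose_mul, Matrix.mul_assoc, ← Matrix.mul_assoc U,
      ← Matrix.star_eq_conjTranspose U, Matrix.mem_unitaryGroup_iff.mp hU, Matrix.one_mul]
  have hsq : (‖A * U‖ ^ 2 : 𝕜) = ‖A‖ ^ 2 := by
    rw [frobenius_norm_sq_eq_trace, frobenius_norm_sq_eq_trace, hmul]
  exact (sq_eq_sq₀ (norm_nonneg _) (norm_nonneg _)).mp (mod_cast hsq)

end FrobeniusNorm

section Householder

theorem reflection_orthogonal_singleton_apply {E : Type*} [NormedAddCommGroup E]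
    [InnerProductSpace ℝ E] (v y : E) :
    Submodule.reflection (ℝ ∙ v)ᗮ y = y - (2 * inner ℝ v y / ‖v‖ ^ 2) • v := by
  rw [Submodule.reflection_orthogonal_apply, Submodule.reflection_singleton_apply]
  simp only [RCLike.ofReal_real_eq_id, id_eq]
  module

variable {ι : Type*} [Fintype ι] [DecidableEq ι]

/-- The Householder matrix `I - 2 v vᵀ / |v|²` of the reflection in the hyperplane orthogonal to
`v`. For `v = 0` the division convention makes it the identity matrix. -/
def householder (v : EuclideanSpace ℝ ι) : Matrix ι ι ℝ :=
  1 - (2 / ‖v‖ ^ 2) • Matrix.vecMulVec v v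

theorem toMatrix_reflection_orthogonal_singleton (v : EuclideanSpace ℝ ι) :
    LinearMap.toMatrix (EuclideanSpace.basisFun ι ℝ).toBasis (EuclideanSpace.basisFun ι ℝ).toBasis
      (Submodule.reflection (ℝ ∙ v)ᗮ).toLinearMap = householder v := by
  ext i j
  have hentry : Submodule.reflection (ℝ ∙ v)ᗮ (EuclideanSpace.single j 1) i =
      (1 : Matrix ι ι ℝ) i j - 2 * v j / ‖v‖ ^ 2 * v i := by
    simp [reflection_orthogonal_singleton_apply, EuclideanSpace.inner_single_right,
      Matrix.one_apply]
  have hhouseholder : householder v i j =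
      (1 : Matrix ι ι ℝ) i j - 2 * v j / ‖v‖ ^ 2 * v i := by
    simp only [householder, Matrix.sub_apply, Matrix.smul_apply, Matrix.vecMulVec_apply,
      smul_eq_mul]
    ring
  simpa [LinearMap.toMatrix_apply, hhouseholder] using hentry

theorem householder_mem_unitaryGroup (v : EuclideanSpace ℝ ι) :
    householder v ∈ Matrix.unitaryGroup ι ℝ := by
  rw [← toMatrix_reflection_orthogonal_singleton]
  exact LinearIsometryEquiv.toMatrix_mem_unitaryGroup _ _ _

end Householder

section Jacobian

open EuclideanGeometry
open scoped Matrix.Norms.Frobenius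

variable {ι κ μ : Type*} [Fintype ι] [DecidableEq ι] [Fintype κ] [DecidableEq κ] [Fintype μ]

/-- The Jacobian matrix of a map between Euclidean spaces, that is, the matrix of its Fréchet
derivative in the standard bases. It is zero where the map is not differentiable. -/
def jacobian (f : EuclideanSpace ℝ ι → EuclideanSpace ℝ μ) (x : EuclideanSpace ℝ ι) :
    Matrix μ ι ℝ :=
  LinearMap.toMatrix (EuclideanSpace.basisFun ι ℝ).toBasis (EuclideanSpace.basisFun μ ℝ).toBasis
    (fderiv ℝ f x).toLinearMap

theorem jacobian_comp {g : EuclideanSpace ℝ κ → EuclideanSpace ℝ μ}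
    {f : EuclideanSpace ℝ ι → EuclideanSpace ℝ κ} {x : EuclideanSpace ℝ ι}
    (hg : DifferentiableAt ℝ g (f x)) (hf : DifferentiableAt ℝ f x) :
    jacobian (g ∘ f) x = jacobian g (f x) * jacobian f x := by
  rw [jacobian, fderiv_comp x hg hf, ContinuousLinearMap.toLinearMap_comp]
  exact LinearMap.toMatrix_comp _ _ _ _ _

theorem jacobian_inversion {c x : EuclideanSpace ℝ ι} (hx : x ≠ c) (R : ℝ) :
    jacobian (inversion c R) x = (R / dist x c) ^ 2 • householder (x - c) := by
  rw [jacobian, (hasFDerivAt_inversion hx).fderiv, ← toMatrix_reflection_orthogonal_singleton,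
    ← map_smul]
  rfl

theorem jacobian_comp_sphereInv_general {c x : EuclideanSpace ℝ ι} (hx : x ≠ c) (R : ℝ)
    {u : EuclideanSpace ℝ ι → EuclideanSpace ℝ μ}
    (hu : DifferentiableAt ℝ u (inversion c R x)) :
    DifferentiableAt ℝ (u ∘ inversion c R) x ∧
    jacobian (u ∘ inversion c R) x =
      (R / dist x c) ^ 2 • (jacobian u (inversion c R x) * householder (x - c)) ∧
    ‖jacobian (u ∘ inversion c R) x‖ ^ 2 =
      (R / dist x c) ^ 4 * ‖jacobian u (inversion c R x)‖ ^ 2 := by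
  have hinv : DifferentiableAt ℝ (inversion c R) x := (hasFDerivAt_inversion hx).differentiableAt
  have hjac : jacobian (u ∘ inversion c R) x =
      (R / dist x c) ^ 2 • (jacobian u (inversion c R x) * householder (x - c)) := by
    rw [jacobian_comp hu hinv, jacobian_inversion hx, Matrix.mul_smul]
  refine ⟨hu.comp x hinv, hjac, ?_⟩
  rw [hjac, norm_smul, norm_of_nonneg (sq_nonneg _),
    frobenius_norm_mul_of_mem_unitaryGroup _ (householder_mem_unitaryGroup _)]
  ring

theorem jac_eq_jacobian (f : E3 → E3) (x : E3) : jac f x = jacobian f x := by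
  ext i j
  simp [jac, jacobian, LinearMap.toMatrix_apply]

theorem frobSq_eq_norm_jacobian_sq (f : E3 → E3) (x : E3) : frobSq f x = ‖jacobian f x‖ ^ 2 := by
  simp [frobSq, jac_eq_jacobian, frobenius_norm_sq_eq_sum]

end Jacobian

theorem sphereInv_eq_inversion : sphereInv = EuclideanGeometry.inversion 0 1 := by
  ext1 x
  simp [sphereInv, EuclideanGeometry.inversion]

theorem Amat_eq_householder (x : E3) : Amat x = householder x := by
  ext i j
  simp only [Amat, householder, Matrix.of_apply, Matrix.sub_apply, Matrix.one_apply,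
    Matrix.smul_apply, Matrix.vecMulVec_apply, smul_eq_mul]
  ring

/-- If `u` is differentiable at `ι(x)`, then `u ∘ ι` is differentiable at `x`
with Jacobian `(1/|x|²) Du(ι(x)) A(x)`, and the squared Frobenius norms
satisfy `‖D(u∘ι)(x)‖² = ‖Du(ι(x))‖² / |x|⁴`. -/
theorem jacobian_comp_sphereInv (x : E3) (hx : x ≠ 0) (u : E3 → E3)
    (hu : DifferentiableAt ℝ u (sphereInv x)) :
    DifferentiableAt ℝ (u ∘ sphereInv) x ∧
    jac (u ∘ sphereInv) x = (‖x‖ ^ 2)⁻¹ • (jac u (sphereInv x) * Amat x) ∧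
    frobSq (u ∘ sphereInv) x = frobSq u (sphereInv x) / ‖x‖ ^ 4 := by
  rw [sphereInv_eq_inversion] at hu ⊢
  simpa [jac_eq_jacobian, Amat_eq_householder, frobSq_eq_norm_jacobian_sq, div_eq_inv_mul]
    using jacobian_comp_sphereInv_general hx 1 hu
end
end

section
/- Let u : ℝ³ → ℝ³ be continuously differentiable on a neighborhood of the closed annulus {1/2 ≤ |x| ≤ 1} and satisfy |u(x)| = 1 for all x in that annulus. Define ũ(x) := A(x)·u(x/|x|²) for 1 ≤ |x| ≤ 2. Then (1/2)∫_{1/2<|x|<1} ‖Du(x)‖² dx = 4π + (1/2)∫_{1<|x|<2} (1/|x|²)·[ ‖Dũ(x)‖² + (4/|x|⁴)·(ũ(x)·x)² + (4/|x|²)·Σ_{i,j=1}^{3} x_i · (∂_j ũ_i(x)) · ũ_j(x) − (4/|x|²)·(ũ(x)·x)·div ũ(x) ] dx. -/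
noncomputable section

open Real MeasureTheory

def toE3 (v : Fin 3 → ℝ) : E3 := (EuclideanSpace.equiv (Fin 3) ℝ).symm v

/-- Euclidean dot product on `ℝ³`. -/
def dot3 (v w : E3) : ℝ := ∑ i, v i * w i

/-- Divergence of `f : ℝ³ → ℝ³` at `x` (trace of the Jacobian). -/
def div3 (f : E3 → E3) (x : E3) : ℝ := ∑ i, jac f x i i

/-- The extension by spherical reflection, `ũ(x) = A(x) · u(x/|x|²)`. -/
def sphRefl (u : E3 → E3) (x : E3) : E3 :=
  toE3 fun i => ∑ j, Amat x i j * u (sphereInv x) j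

/-!
Inversion is conformal with Jacobian `|x|⁻² A(x)`, and `A(x)`, the reflection in `x^⊥`, is
orthogonal; hence `|D(u ∘ ι)|² = |x|⁻⁴ |Du|² ∘ ι`. Differentiating `v = ũ = A (u ∘ ι)` gives, with
`W = D(u ∘ ι)`,
`Dv = W + (2 / |x|²) ((x · v) I - x (v + Wᵀ x)ᵀ)`,
and expanding `|Dv|²` shows that the integrand of the reflected energy is
`|x|⁻⁶ (|Du|² - 4 |u|² / |y|²)` at `y = ι(x)`. In dimension `n` the coefficient of `(v · x)²` would
be `4 (n - 2) / |x|⁴`, so `n = 3` enters here. Since `|det Dι| = |x|⁻⁶`, a change of variables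
turns the exterior integral into an interior one, and `|u| = 1` makes the correction explicit:
`∫ 4 / |y|²` over `{1/2 < |y| < 1}` is `8π`.
-/

section TraceIdentity

open Matrix

variable {ι R : Type*} [Fintype ι] [DecidableEq ι]

theorem trace_transpose_mul_self_smul_mul {m k : Type*} [Fintype m] [Fintype k] [CommRing R]
    (c : R) (M : Matrix m ι R) (Q : Matrix ι k R) (hQ : Q * Qᵀ = 1) :
    trace ((c • (M * Q))ᵀ * (c • (M * Q))) = c ^ 2 * trace (Mᵀ * M) := by
  calc trace ((c • (M * Q))ᵀ * (c • (M * Q))) = c ^ 2 * trace (Qᵀ * (Mᵀ * M * Q)) := by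
        simp [Matrix.mul_assoc, smul_smul, sq]
    _ = c ^ 2 * trace (Mᵀ * M) := by
        rw [trace_mul_comm, Matrix.mul_assoc, hQ, Matrix.mul_one]

theorem trace_transpose_mul_self_add_smul_one_add_vecMulVec [CommRing R]
    (W : Matrix ι ι R) (a : R) (x y : ι → R) :
    trace ((W + a • 1 + vecMulVec x y)ᵀ * (W + a • 1 + vecMulVec x y)) =
      trace (Wᵀ * W) + 2 * a * trace W + Fintype.card ι * a ^ 2 + (x ⬝ᵥ x) * (y ⬝ᵥ y) +
        2 * ((x ᵥ* W) ⬝ᵥ y) + 2 * a * (x ⬝ᵥ y) := by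
  simp only [transpose_add, transpose_smul, transpose_one, transpose_vecMulVec, Matrix.mul_add,
    Matrix.add_mul, Algebra.smul_mul_assoc, one_mul, vecMulVec_mul, Algebra.mul_smul_comm, mul_one,
    smul_add, mul_vecMulVec, add_mulVec, mulVec_transpose, smul_mulVec, one_mulVec,
    vecMulVec_mulVec, op_smul_eq_smul, trace_add, trace_smul, smul_eq_mul, trace_vecMulVec,
    dotProduct_comm y, trace_transpose, trace_one, add_dotProduct, smul_dotProduct]
  ring

theorem trace_transpose_mul_self_reflected [Field R] {W V : Matrix ι ι R} {x v : ι → R}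
    (hx : x ⬝ᵥ x ≠ 0)
    (hV : V = W + (2 / (x ⬝ᵥ x)) • ((x ⬝ᵥ v) • 1 - vecMulVec x (v + x ᵥ* W))) :
    trace (Vᵀ * V) + 4 * (Fintype.card ι - 2) / (x ⬝ᵥ x) ^ 2 * (v ⬝ᵥ x) ^ 2 +
        4 / (x ⬝ᵥ x) * (x ⬝ᵥ V *ᵥ v) - 4 / (x ⬝ᵥ x) * (v ⬝ᵥ x) * trace V =
      trace (Wᵀ * W) - 4 / (x ⬝ᵥ x) * (v ⬝ᵥ v) := by
  set s := x ⬝ᵥ x with hs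
  set a := 2 / s * (x ⬝ᵥ v) with ha
  set y := -(2 / s) • (v + x ᵥ* W) with hy
  have hV' : V = W + a • 1 + vecMulVec x y := by
    rw [hV, hy, ha, smul_sub, smul_smul, vecMulVec_smul, neg_smul]
    abel
  have h_trace : trace V = trace W + Fintype.card ι * a + x ⬝ᵥ y := by
    simp [hV', mul_comm]
  have h_quad : x ⬝ᵥ V *ᵥ v = (x ᵥ* W) ⬝ᵥ v + a * (x ⬝ᵥ v) + s * (y ⬝ᵥ v) := by
    simp [hV', hs, add_mulVec, smul_mulVec, vecMulVec_mulVec, dotProduct_mulVec, mul_comm]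
  rw [h_trace, h_quad, hV', trace_transpose_mul_self_add_smul_one_add_vecMulVec]
  simp only [hy, ha, dotProduct_add, add_dotProduct, dotProduct_smul, smul_dotProduct, smul_eq_mul,
    dotProduct_comm v, dotProduct_comm _ x, ← hs]
  field_simp
  ring

end TraceIdentity

section Reflection

variable {E : Type*} [NormedAddCommGroup E] [InnerProductSpace ℝ E]

theorem reflection_orthogonal_span_singleton_apply (x v : E) :
    (ℝ ∙ x)ᗮ.reflection v = v - (2 * inner ℝ x v / ‖x‖ ^ 2) • x := by
  rw [Submodule.reflection_orthogonal_apply, Submodule.reflection_singleton_apply]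
  simp only [RCLike.ofReal_real_eq_id, id_eq]
  module

theorem hasFDerivAt_reflection_orthogonal_span_singleton {w : E → E} {W : E →L[ℝ] E} {x : E}
    (hw : HasFDerivAt w W x) (hx : x ≠ 0) :
    HasFDerivAt (fun y ↦ (ℝ ∙ y)ᗮ.reflection (w y))
      (W + (2 / ‖x‖ ^ 2) • (inner ℝ x ((ℝ ∙ x)ᗮ.reflection (w x)) • ContinuousLinearMap.id ℝ E -
        (innerSL ℝ ((ℝ ∙ x)ᗮ.reflection (w x)) + (innerSL ℝ x).comp W).smulRight x)) x := by
  have hx' : ‖x‖ ^ 2 ≠ 0 := pow_ne_zero 2 (norm_ne_zero_iff.2 hx)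
  have hid := hasFDerivAt_id (𝕜 := ℝ) x
  have h_coeff := ((hid.inner ℝ hw).const_mul 2).mul
    ((hasDerivAt_inv hx').comp_hasFDerivAt x hid.norm_sq)
  have h_deriv := hw.sub (h_coeff.smul hid)
  refine (h_deriv.congr_of_eventuallyEq (.of_forall fun y ↦ ?_)).congr_fderiv ?_
  · simp [reflection_orthogonal_span_singleton_apply, div_eq_mul_inv]
  · ext z
    simp only [id_eq, Pi.mul_apply, Function.comp_apply, ContinuousLinearMap.comp_id, neg_smul,
      smul_neg, sub_apply, add_apply, smul_apply, ContinuousLinearMap.id_apply,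
      ContinuousLinearMap.smulRight_apply, neg_apply, coe_innerSL_apply, real_inner_comm z,
      nsmul_eq_mul, Nat.cast_ofNat, smul_eq_mul, ContinuousLinearMap.comp_apply,
      ContinuousLinearMap.prod_apply, fderivInnerCLM_apply,
      reflection_orthogonal_span_singleton_apply, inner_sub_right, inner_smul_right,
      real_inner_self_eq_norm_sq, map_sub, map_smul]
    match_scalars <;> field_simp <;> ring

end Reflection

section PolarIntegration

open Module

variable {E F : Type*} [NormedAddCommGroup E] [MeasurableSpace E] [BorelSpace E]
  [NormedAddCommGroup F] (μ : Measure E)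

theorem setIntegral_norm_preimage_fun_norm [NormedSpace ℝ E] [FiniteDimensional ℝ E]
    [Nontrivial E] [NormedSpace ℝ F] [μ.IsAddHaarMeasure] (f : ℝ → F) {s : Set ℝ}
    (hs : MeasurableSet s) :
    ∫ x in norm ⁻¹' s, f ‖x‖ ∂μ =
      finrank ℝ E • μ.real (Metric.ball 0 1) •
        ∫ r in Set.Ioi 0 ∩ s, r ^ (finrank ℝ E - 1) • f r := by
  have h_indicator (x : E) : (norm ⁻¹' s).indicator (fun x ↦ f ‖x‖) x = s.indicator f ‖x‖ := rfl
  rw [← integral_indicator (measurable_norm hs), ← setIntegral_indicator hs]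
  simp only [h_indicator, integral_fun_norm_addHaar, Set.indicator_smul_apply]

theorem integrableOn_norm_preimage_Ioo [ProperSpace E] [IsFiniteMeasureOnCompacts μ]
    {f : E → F} {a b : ℝ} (hf : ContinuousOn f (norm ⁻¹' Set.Icc a b)) :
    IntegrableOn f (norm ⁻¹' Set.Ioo a b) μ := by
  have h_compact : IsCompact (norm ⁻¹' Set.Icc a b : Set E) :=
    (isCompact_closedBall 0 b).of_isClosed_subset (isClosed_Icc.preimage continuous_norm)
      fun x hx ↦ by simpa using hx.2
  exact (hf.integrableOn_compact h_compact).mono_set (Set.preimage_mono Set.Ioo_subset_Icc_self)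

end PolarIntegration

section Inversion

open EuclideanGeometry Module

variable {E F : Type*} [NormedAddCommGroup E] [InnerProductSpace ℝ E]

theorem abs_det_smul_reflection [FiniteDimensional ℝ E] (c : ℝ) (K : Submodule ℝ E) :
    |(c • (K.reflection : E →L[ℝ] E)).det| = |c| ^ finrank ℝ E := by
  have h_det : (c • (K.reflection : E →L[ℝ] E)).det =
      LinearMap.det (c • K.reflection.toLinearMap) := rfl
  rw [h_det, LinearMap.det_smul, Submodule.det_reflection, abs_mul, abs_pow]
  simp

theorem setIntegral_image_inversion [FiniteDimensional ℝ E] [MeasurableSpace E] [BorelSpace E]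
    [NormedAddCommGroup F] [NormedSpace ℝ F] (μ : Measure E) [μ.IsAddHaarMeasure]
    {c : E} {R : ℝ} (hR : R ≠ 0) {s : Set E} (hs : MeasurableSet s) (hc : c ∉ s) (g : E → F) :
    ∫ y in inversion c R '' s, g y ∂μ =
      ∫ x in s, (R / dist x c) ^ (2 * finrank ℝ E) • g (inversion c R x) ∂μ := by
  rw [integral_image_eq_integral_abs_det_fderiv_smul μ hs
    (fun x hx ↦ (hasFDerivAt_inversion (ne_of_mem_of_not_mem hx hc)).hasFDerivWithinAt)
    (inversion_injective c hR).injOn]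
  simp only [abs_det_smul_reflection, abs_pow, sq_abs, pow_mul]

theorem norm_inversion_zero_one (x : E) : ‖inversion (0 : E) 1 x‖ = ‖x‖⁻¹ := by
  simpa using dist_inversion_center (0 : E) x 1

theorem inversion_image_norm_preimage_Ioo {a b : ℝ} (ha : 0 < a) (hb : 0 < b) :
    inversion (0 : E) 1 '' (norm ⁻¹' Set.Ioo b⁻¹ a⁻¹) = norm ⁻¹' Set.Ioo a b := by
  have h_inv := inversion_involutive (0 : E) one_ne_zero
  ext x
  rw [Set.image_eq_preimage_of_inverse h_inv h_inv]
  rcases (norm_nonneg x).eq_or_lt with hx | hx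
  · simp [norm_inversion_zero_one, ← hx, ha.not_gt, hb.le]
  · simp [norm_inversion_zero_one, inv_lt_inv₀, ha, hb, hx, and_comm]

end Inversion

section Jacobian

theorem jac_eq_toMatrixOrthonormal (f : E3 → E3) (x : E3) :
    jac f x = LinearMap.toMatrixOrthonormal (EuclideanSpace.basisFun (Fin 3) ℝ)
      (fderiv ℝ f x : E3 →ₗ[ℝ] E3) := by
  ext i j
  simp [jac, LinearMap.toMatrixOrthonormal_apply_apply, EuclideanSpace.inner_single_left]

theorem jac_comp {f g : E3 → E3} {x : E3} (hf : DifferentiableAt ℝ f (g x))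
    (hg : DifferentiableAt ℝ g x) : jac (f ∘ g) x = jac f (g x) * jac g x := by
  simp only [jac_eq_toMatrixOrthonormal, fderiv_comp x hf hg, ← map_mul]
  rfl

theorem frobSq_eq_trace (f : E3 → E3) (x : E3) :
    frobSq f x = ((jac f x).transpose * jac f x).trace := by
  rw [frobSq, Finset.sum_comm]
  simp [Matrix.trace, Matrix.mul_apply, sq]

theorem continuousOn_frobSq {u : E3 → E3} {U : Set E3} (hU : IsOpen U) (hu : ContDiffOn ℝ 1 u U) :
    ContinuousOn (frobSq u) U := by
  have h_fderiv : ContinuousOn (fderiv ℝ u) U := hu.continuousOn_fderiv_of_isOpen hU le_rfl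
  unfold frobSq jac
  simp only [Matrix.of_apply]
  fun_prop

end Jacobian

section SphericalReflection

open Matrix EuclideanGeometry

theorem dotProduct_ofLp_self {ι : Type*} [Fintype ι] (x : EuclideanSpace ℝ ι) :
    x.ofLp ⬝ᵥ x.ofLp = ‖x‖ ^ 2 := by
  rw [EuclideanSpace.real_norm_sq_eq]
  simp only [dotProduct, sq]

theorem sphereInv_eq_inversion_s2 : sphereInv = inversion (0 : E3) 1 := by
  funext x
  simp [sphereInv, inversion]

theorem Amat_eq_toMatrixOrthonormal (x : E3) :
    Amat x = LinearMap.toMatrixOrthonormal (EuclideanSpace.basisFun (Fin 3) ℝ)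
      ((ℝ ∙ x)ᗮ.reflection : E3 →ₗ[ℝ] E3) := by
  ext i j
  simp only [Amat, of_apply, LinearMap.toMatrixOrthonormal_apply_apply,
    EuclideanSpace.basisFun_apply, LinearEquiv.coe_coe, ContinuousLinearEquiv.coe_toLinearEquiv,
    LinearIsometryEquiv.coe_toContinuousLinearEquiv, reflection_orthogonal_span_singleton_apply,
    EuclideanSpace.inner_single_right, ringHom_apply, one_mul, EuclideanSpace.inner_single_left,
    PiLp.sub_apply, PiLp.single_apply, PiLp.smul_apply, smul_eq_mul, sub_right_inj]
  ring

theorem Amat_mul_transpose (x : E3) : Amat x * (Amat x)ᵀ = 1 := by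
  have h_symm : (Amat x)ᵀ = Amat x := by
    ext i j
    simp only [Amat, transpose_apply, of_apply, eq_comm (a := j)]
    ring
  rw [h_symm, Amat_eq_toMatrixOrthonormal, ← map_mul,
    ← map_one (LinearMap.toMatrixOrthonormal (EuclideanSpace.basisFun (Fin 3) ℝ))]
  congr 1
  ext1 v
  simp

theorem differentiableAt_sphereInv {x : E3} (hx : x ≠ 0) : DifferentiableAt ℝ sphereInv x :=
  sphereInv_eq_inversion_s2 ▸ (hasFDerivAt_inversion hx).differentiableAt

theorem jac_sphereInv {x : E3} (hx : x ≠ 0) : jac sphereInv x = (‖x‖ ^ 2)⁻¹ • Amat x := by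
  rw [jac_eq_toMatrixOrthonormal, Amat_eq_toMatrixOrthonormal, sphereInv_eq_inversion_s2,
    (hasFDerivAt_inversion hx).fderiv, ← map_smul]
  simp

theorem sphRefl_eq_reflection (u : E3 → E3) (x : E3) :
    sphRefl u x = (ℝ ∙ x)ᗮ.reflection (u (sphereInv x)) := by
  rw [reflection_orthogonal_span_singleton_apply]
  ext i
  simp only [sphRefl, toE3, Amat, of_apply, sub_mul, ite_mul, one_mul, zero_mul,
    Finset.sum_sub_distrib, Finset.sum_ite_eq, Finset.mem_univ, ↓reduceIte,
    PiLp.continuousLinearEquiv_symm_apply, PiLp.inner_apply, RCLike.inner_apply, conj_trivial,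
    Finset.mul_sum, Finset.sum_div, PiLp.sub_apply, PiLp.smul_apply, smul_eq_mul, Finset.sum_mul,
    sub_right_inj]
  exact Finset.sum_congr rfl fun j _ ↦ by ring

theorem norm_sphRefl (u : E3 → E3) (x : E3) : ‖sphRefl u x‖ = ‖u (sphereInv x)‖ := by
  rw [sphRefl_eq_reflection, LinearIsometryEquiv.norm_map]

theorem frobSq_comp_sphereInv {u : E3 → E3} {x : E3} (hx : x ≠ 0)
    (hu : DifferentiableAt ℝ u (sphereInv x)) :
    frobSq (u ∘ sphereInv) x = (‖x‖ ^ 4)⁻¹ * frobSq u (sphereInv x) := by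
  rw [frobSq_eq_trace, jac_comp hu (differentiableAt_sphereInv hx), jac_sphereInv hx,
    Matrix.mul_smul, trace_transpose_mul_self_smul_mul _ _ _ (Amat_mul_transpose x),
    ← frobSq_eq_trace]
  ring

theorem jac_sphRefl {u : E3 → E3} {x : E3} (hx : x ≠ 0)
    (hu : DifferentiableAt ℝ u (sphereInv x)) :
    jac (sphRefl u) x = jac (u ∘ sphereInv) x + (2 / (x.ofLp ⬝ᵥ x.ofLp)) •
      ((x.ofLp ⬝ᵥ (sphRefl u x).ofLp) • 1 -
        vecMulVec x.ofLp ((sphRefl u x).ofLp + x.ofLp ᵥ* jac (u ∘ sphereInv) x)) := by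
  have h_comp := (hu.comp x (differentiableAt_sphereInv hx)).hasFDerivAt
  have h_fderiv := (hasFDerivAt_reflection_orthogonal_span_singleton h_comp hx).fderiv
  simp only [Function.comp_apply, ← sphRefl_eq_reflection] at h_fderiv
  rw [dotProduct_ofLp_self]
  ext i j
  simp [jac, h_fderiv, PiLp.inner_apply, one_apply, dotProduct, vecMul,
    vecMulVec_apply, mul_comm]

/-- The integrand of the reflected exterior energy `Ẽ`, as a function of the exterior map `v`,
which is the spherical reflection `ũ` in the applications. -/
def reflEnergyDensity (v : E3 → E3) (x : E3) : ℝ :=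
  (1 / ‖x‖ ^ 2) *
    (frobSq v x
      + (4 / ‖x‖ ^ 4) * (dot3 (v x) x) ^ 2
      + (4 / ‖x‖ ^ 2) * ∑ i, ∑ j, x i * (jac v x i j) * v x j
      - (4 / ‖x‖ ^ 2) * dot3 (v x) x * div3 v x)

theorem reflEnergyDensity_eq_trace (v : E3 → E3) (x : E3) :
    reflEnergyDensity v x = 1 / ‖x‖ ^ 2 *
      (((jac v x)ᵀ * jac v x).trace + 4 / ‖x‖ ^ 4 * ((v x).ofLp ⬝ᵥ x.ofLp) ^ 2 +
        4 / ‖x‖ ^ 2 * (x.ofLp ⬝ᵥ jac v x *ᵥ (v x).ofLp) -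
        4 / ‖x‖ ^ 2 * ((v x).ofLp ⬝ᵥ x.ofLp) * (jac v x).trace) := by
  simp only [reflEnergyDensity, frobSq_eq_trace, dot3, div3, dotProduct, mulVec, Finset.mul_sum,
    mul_assoc, trace, diag_apply]

theorem reflEnergyDensity_sphRefl {u : E3 → E3} {x : E3} (hx : x ≠ 0)
    (hu : DifferentiableAt ℝ u (sphereInv x)) :
    reflEnergyDensity (sphRefl u) x =
      (‖x‖ ^ 6)⁻¹ *
        (frobSq u (sphereInv x) - 4 * ‖u (sphereInv x)‖ ^ 2 / ‖sphereInv x‖ ^ 2) := by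
  have h_norm : ‖x‖ ≠ 0 := norm_ne_zero_iff.2 hx
  have h_identity := trace_transpose_mul_self_reflected
    (by simpa [dotProduct_ofLp_self] using hx) (jac_sphRefl hx hu)
  have h_energy : reflEnergyDensity (sphRefl u) x = 1 / ‖x‖ ^ 2 *
      (frobSq (u ∘ sphereInv) x - 4 / ‖x‖ ^ 2 * ‖sphRefl u x‖ ^ 2) := by
    rw [reflEnergyDensity_eq_trace, frobSq_eq_trace, ← dotProduct_ofLp_self (sphRefl u x),
      ← dotProduct_ofLp_self x, ← h_identity, dotProduct_ofLp_self]
    norm_num [← pow_mul]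
  rw [h_energy, frobSq_comp_sphereInv hx hu, norm_sphRefl, sphereInv_eq_inversion_s2,
    norm_inversion_zero_one]
  field_simp

theorem integral_image_sphereInv_frobSq_sub (u : E3 → E3) {s : Set E3} (hs : MeasurableSet s)
    (h0 : 0 ∉ s) (hu : ∀ x ∈ s, DifferentiableAt ℝ u (sphereInv x)) :
    ∫ y in sphereInv '' s, (frobSq u y - 4 * ‖u y‖ ^ 2 / ‖y‖ ^ 2) =
      ∫ x in s, reflEnergyDensity (sphRefl u) x := by
  rw [sphereInv_eq_inversion_s2, setIntegral_image_inversion volume one_ne_zero hs h0,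
    ← sphereInv_eq_inversion_s2]
  refine setIntegral_congr_fun hs fun x hx ↦ ?_
  rw [reflEnergyDensity_sphRefl (ne_of_mem_of_not_mem hx h0) (hu x hx)]
  simp

theorem integral_annulus_inv_norm_sq {a b : ℝ} (ha : 0 ≤ a) (hab : a ≤ b) :
    ∫ x in (norm ⁻¹' Set.Ioo a b : Set E3), (‖x‖ ^ 2)⁻¹ = 4 * π * (b - a) := by
  rw [setIntegral_norm_preimage_fun_norm volume (fun r ↦ (r ^ 2)⁻¹) measurableSet_Ioo]
  have h_inter : Set.Ioi 0 ∩ Set.Ioo a b = Set.Ioo a b :=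
    Set.inter_eq_right.2 fun r hr ↦ ha.trans_lt hr.1
  have h_const : Set.EqOn (fun r : ℝ ↦ r ^ (Module.finrank ℝ E3 - 1) • (r ^ 2)⁻¹)
      (fun _ ↦ 1) (Set.Ioo a b) := fun r hr ↦ by
    simp [(ha.trans_lt hr.1).ne']
  rw [h_inter, setIntegral_congr_fun measurableSet_Ioo h_const]
  have h_ball : volume.real (Metric.ball (0 : E3) 1) = π * 4 / 3 := by
    simp [Measure.real, EuclideanSpace.volume_ball_fin_three, pi_nonneg, div_nonneg]
  simp only [finrank_euclideanSpace, Fintype.card_fin, h_ball, integral_const, MeasurableSet.univ,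
    measureReal_restrict_apply, Set.univ_inter, volume_real_Ioo, sub_nonneg, hab, sup_of_le_left,
    smul_eq_mul, mul_one, nsmul_eq_mul, Nat.cast_ofNat]
  ring

end SphericalReflection

theorem dirichlet_energy_eq_reflected_energy_general (u : E3 → E3) {a b : ℝ} (ha : 0 < a)
    (hab : a ≤ b) (hu : DifferentiableOn ℝ u (norm ⁻¹' Set.Ioo a b))
    (hint : IntegrableOn (frobSq u) (norm ⁻¹' Set.Ioo a b))
    (hnorm : ∀ x : E3, ‖x‖ ∈ Set.Ioo a b → ‖u x‖ = 1) :
    (1 / 2) * ∫ x in norm ⁻¹' Set.Ioo a b, frobSq u x =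
      8 * π * (b - a) +
        (1 / 2) * ∫ x in norm ⁻¹' Set.Ioo b⁻¹ a⁻¹, reflEnergyDensity (sphRefl u) x := by
  have hb : 0 < b := ha.trans_le hab
  have h_image : sphereInv '' (norm ⁻¹' Set.Ioo b⁻¹ a⁻¹) = norm ⁻¹' Set.Ioo a b := by
    rw [sphereInv_eq_inversion_s2, inversion_image_norm_preimage_Ioo ha hb]
  have h_diff : ∀ x ∈ norm ⁻¹' Set.Ioo b⁻¹ a⁻¹, DifferentiableAt ℝ u (sphereInv x) :=
    fun x hx ↦ hu.differentiableAt <| (isOpen_Ioo.preimage continuous_norm).mem_nhds <|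
      h_image.subset (Set.mem_image_of_mem sphereInv hx)
  have h_integrable : IntegrableOn (fun y : E3 ↦ 4 * (‖y‖ ^ 2)⁻¹) (norm ⁻¹' Set.Ioo a b) :=
    integrableOn_norm_preimage_Ioo volume <| continuousOn_const.mul <|
      ContinuousOn.inv₀ (by fun_prop) fun x hx ↦ pow_ne_zero 2 (ha.trans_le hx.1).ne'
  have h_reflected : ∫ x in norm ⁻¹' Set.Ioo b⁻¹ a⁻¹, reflEnergyDensity (sphRefl u) x =
      ∫ y in norm ⁻¹' Set.Ioo a b, (frobSq u y - 4 * (‖y‖ ^ 2)⁻¹) := by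
    rw [← integral_image_sphereInv_frobSq_sub u (measurable_norm measurableSet_Ioo)
      (by simp [hb.le]) h_diff, h_image]
    refine setIntegral_congr_fun (measurable_norm measurableSet_Ioo) fun y hy ↦ ?_
    simp [hnorm y hy, div_eq_mul_inv]
  rw [h_reflected, integral_sub hint h_integrable, integral_const_mul,
    integral_annulus_inv_norm_sq ha.le hab]
  ring

/-- The Dirichlet energy of `u` over the annulus `{1/2 < |x| < 1}` equals the
reflected exterior energy `Ẽ(ũ)` of the spherical reflection `ũ` over
`{1 < |x| < 2}`. -/
theorem dirichlet_energy_eq_reflected_energy (u : E3 → E3) (U : Set E3)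
    (hU : IsOpen U)
    (hsub : {x : E3 | 1 / 2 ≤ ‖x‖ ∧ ‖x‖ ≤ 1} ⊆ U)
    (hu : ContDiffOn ℝ 1 u U)
    (hnorm : ∀ x : E3, 1 / 2 ≤ ‖x‖ → ‖x‖ ≤ 1 → ‖u x‖ = 1) :
    (1 / 2) * ∫ x in {x : E3 | 1 / 2 < ‖x‖ ∧ ‖x‖ < 1}, frobSq u x =
      4 * π + (1 / 2) * ∫ x in {x : E3 | 1 < ‖x‖ ∧ ‖x‖ < 2},
        (1 / ‖x‖ ^ 2) *
          (frobSq (sphRefl u) x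
            + (4 / ‖x‖ ^ 4) * (dot3 (sphRefl u x) x) ^ 2
            + (4 / ‖x‖ ^ 2) * ∑ i, ∑ j, x i * (jac (sphRefl u) x i j) * sphRefl u x j
            - (4 / ‖x‖ ^ 2) * dot3 (sphRefl u x) x * div3 (sphRefl u) x) := by
  have h := dirichlet_energy_eq_reflected_energy_general u one_half_pos one_half_lt_one.le
    ((hu.differentiableOn one_ne_zero).mono fun x hx ↦ hsub ⟨hx.1.le, hx.2.le⟩)
    (integrableOn_norm_preimage_Ioo volume ((continuousOn_frobSq hU hu).mono hsub))
    fun x hx ↦ hnorm x hx.1.le hx.2.le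
  rwa [show 8 * π * (1 - 1 / 2) = 4 * π by ring, inv_one, show (1 / 2 : ℝ)⁻¹ = 2 by norm_num] at h
end
end

section
/- Let f : ℝ² → ℝ, Φ : ℝ² → ℝ², and (t₀,c₀) ∈ ℝ². Assume: Φ is differentiable at (t₀,c₀); f is differentiable at Φ(t₀,c₀); the partial derivative in the first variable satisfies ∂_tΦ(t₀,c₀) = (−∂₂f(Φ(t₀,c₀)), ∂₁f(Φ(t₀,c₀))) (i.e. it equals the rotated gradient ∇⊥f at Φ(t₀,c₀)); and f(Φ(t₀,c)) = c for all c in a neighborhood of c₀. Then the Jacobian determinant of Φ at (t₀,c₀), i.e. det[∂_tΦ(t₀,c₀) | ∂_cΦ(t₀,c₀)], equals −1. -/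
noncomputable section

open Real Filter

/-!
Pairing the rotated gradient of `f` with any vector `v` by the determinant returns `-Df(v)`.
Hence `det[∂ₜΦ | ∂꜀Φ] = -Df(∂꜀Φ)` as soon as `∂ₜΦ = ∇⊥f`, and by the chain rule `Df(∂꜀Φ)` is the
derivative of `c ↦ f (Φ (t₀, c))`, a function which is the identity near `c₀` in level-set
coordinates.
-/

section LevelSetCoordinates

theorem linearMap_apply_eq_fst_mul_add_snd_mul {R : Type*} [CommSemiring R]
    (L : R × R →ₗ[R] R) (v : R × R) : L v = v.1 * L (1, 0) + v.2 * L (0, 1) := by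
  calc L v = L (v.1 • (1, 0) + v.2 • (0, 1)) := by simp
    _ = v.1 * L (1, 0) + v.2 * L (0, 1) := by
      simp only [map_add, map_smul, smul_eq_mul]

variable {𝕜 : Type*} [NontriviallyNormedField 𝕜]

/-- The rotated gradient `∇⊥f = (-∂₂f, ∂₁f)` of a function of two variables. The partial derivatives
are values of `fderiv`, so `perpGrad f x = 0` where `f` is not differentiable. -/
def perpGrad (f : 𝕜 × 𝕜 → 𝕜) (x : 𝕜 × 𝕜) : 𝕜 × 𝕜 :=
  (-(fderiv 𝕜 f x (0, 1)), fderiv 𝕜 f x (1, 0))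

theorem perpGrad_fst_mul_sub_snd_mul (f : 𝕜 × 𝕜 → 𝕜) (x v : 𝕜 × 𝕜) :
    (perpGrad f x).1 * v.2 - (perpGrad f x).2 * v.1 = -fderiv 𝕜 f x v := by
  have hv : fderiv 𝕜 f x v = v.1 * fderiv 𝕜 f x (1, 0) + v.2 * fderiv 𝕜 f x (0, 1) :=
    linearMap_apply_eq_fst_mul_add_snd_mul (fderiv 𝕜 f x).toLinearMap v
  rw [hv, perpGrad]
  ring

theorem hasDerivAt_comp_prodMk_right {E F : Type*} [NormedAddCommGroup E] [NormedSpace 𝕜 E]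
    [NormedAddCommGroup F] [NormedSpace 𝕜 F] {Φ : E × 𝕜 → F} {t : E} {c : 𝕜}
    (hΦ : DifferentiableAt 𝕜 Φ (t, c)) :
    HasDerivAt (fun s ↦ Φ (t, s)) (fderiv 𝕜 Φ (t, c) (0, 1)) c :=
  hΦ.hasFDerivAt.comp_hasDerivAt c ((hasDerivAt_const c t).prodMk (hasDerivAt_id c))

theorem level_set_jacobian_general {f : 𝕜 × 𝕜 → 𝕜} {Φ : 𝕜 × 𝕜 → 𝕜 × 𝕜} {t₀ c₀ : 𝕜}
    (hΦ : DifferentiableAt 𝕜 Φ (t₀, c₀)) (hf : DifferentiableAt 𝕜 f (Φ (t₀, c₀)))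
    (hflow : fderiv 𝕜 Φ (t₀, c₀) (1, 0) = perpGrad f (Φ (t₀, c₀))) :
    (fderiv 𝕜 Φ (t₀, c₀) (1, 0)).1 * (fderiv 𝕜 Φ (t₀, c₀) (0, 1)).2 -
      (fderiv 𝕜 Φ (t₀, c₀) (1, 0)).2 * (fderiv 𝕜 Φ (t₀, c₀) (0, 1)).1 =
      -deriv (fun c ↦ f (Φ (t₀, c))) c₀ := by
  have hchain : HasDerivAt (fun c ↦ f (Φ (t₀, c)))
      (fderiv 𝕜 f (Φ (t₀, c₀)) (fderiv 𝕜 Φ (t₀, c₀) (0, 1))) c₀ :=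
    hf.hasFDerivAt.comp_hasDerivAt c₀ (hasDerivAt_comp_prodMk_right hΦ)
  rw [hflow, perpGrad_fst_mul_sub_snd_mul, hchain.deriv]

end LevelSetCoordinates

/-- Level-set coordinates have Jacobian determinant `−1`: if
`Φ(t,c)` parametrizes the level sets of `f` (so `f(Φ(t₀,c)) = c` near `c₀`)
and `∂ₜΦ(t₀,c₀)` equals the rotated gradient `∇⊥f = (−∂₂f, ∂₁f)` at
`Φ(t₀,c₀)`, then `det[∂ₜΦ | ∂꜀Φ](t₀,c₀) = −1`. -/
theorem level_set_jacobian (f : ℝ × ℝ → ℝ) (Φ : ℝ × ℝ → ℝ × ℝ)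
    (t₀ c₀ : ℝ)
    (hΦ : DifferentiableAt ℝ Φ (t₀, c₀))
    (hf : DifferentiableAt ℝ f (Φ (t₀, c₀)))
    (hflow : fderiv ℝ Φ (t₀, c₀) (1, 0) =
      (-(fderiv ℝ f (Φ (t₀, c₀)) (0, 1)), fderiv ℝ f (Φ (t₀, c₀)) (1, 0)))
    (hlevel : ∀ᶠ c in nhds c₀, f (Φ (t₀, c)) = c) :
    (fderiv ℝ Φ (t₀, c₀) (1, 0)).1 * (fderiv ℝ Φ (t₀, c₀) (0, 1)).2 -
      (fderiv ℝ Φ (t₀, c₀) (1, 0)).2 * (fderiv ℝ Φ (t₀, c₀) (0, 1)).1 = -1 := by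
  have hderiv : deriv (fun c ↦ f (Φ (t₀, c))) c₀ = 1 :=
    (EventuallyEq.deriv_eq hlevel).trans (deriv_id c₀)
  rw [level_set_jacobian_general hΦ hf hflow, hderiv]
end
end

section
/- Let b, c₁, c₂ ∈ ℝ with c₁ ≠ 0, let I ⊆ ℝ be an open interval, and let λ : I → ℝ be twice differentiable with λ(t) > 0 and λ(t) ≠ 6b/c₁ for all t ∈ I. Suppose that (c₂ + t)² = (1/c₁)·(λ(t) + 3b/c₁)·(λ(t) − 6b/c₁)² for all t ∈ I. Then λ satisfies the ordinary differential equation λ″(t) + λ′(t)²/(2λ(t)) + 2b/(3λ(t)³) = 0 for all t ∈ I. -/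
noncomputable section

open Real Set

/-!
The cubic `c y² = (x - α) (x - β)²` is singular at `(β, 0)`, hence rational: it is parametrized by
the slope `u = y / (x - β)` of the line joining a point to the singularity, with `x = α + c u²` and
`y = u (x - β)`. Differentiating these gives `x' = 2 c u u'` and `y' = w u'`, where
`w = 3 x - 2 α - β`. When `y' = 1`, this says `w x' = 2 c u` and `w u' = 1`. The square of
`w x' = 2 c u` expresses `x'²` through `x`, its derivative expresses `x''` through `x` and `x'`, and
a linear combination of the two is the second-order equation. For `α = -3 b / c₁` and
`β = 6 b / c₁` the sum `2 α + β` vanishes, so that `w = 3 x`.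
-/

open scoped Topology

section Algebra

variable {𝕜 : Type*} [Field 𝕜] {c α β x y : 𝕜}

/-- The slope of the line joining `(x, y)` to `(β, 0)`, the rational parameter of the cubic
`c y² = (x - α) (x - β)²`; it has the junk value `0` when `x = β`. -/
def cubicSlope (β x y : 𝕜) : 𝕜 := y / (x - β)

lemma cubicSlope_mul_sub (hx : x ≠ β) : cubicSlope β x y * (x - β) = y :=
  div_mul_cancel₀ y (sub_ne_zero.mpr hx)

lemma mul_cubicSlope_sq (hx : x ≠ β) (h : c * y ^ 2 = (x - α) * (x - β) ^ 2) :
    c * cubicSlope β x y ^ 2 = x - α := by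
  rw [cubicSlope, div_pow, ← mul_div_assoc, h]
  exact mul_div_cancel_right₀ _ (pow_ne_zero 2 (sub_ne_zero.mpr hx))

end Algebra

section Calculus

variable {𝕜 : Type*} [NontriviallyNormedField 𝕜] {c α β a t x'₀ x'' y' u' : 𝕜} {x x' y : 𝕜 → 𝕜}

lemma differentiableAt_cubicSlope (hx : DifferentiableAt 𝕜 x t) (hy : DifferentiableAt 𝕜 y t)
    (hne : x t ≠ β) : DifferentiableAt 𝕜 (fun s ↦ cubicSlope β (x s) (y s)) t :=
  hy.div (hx.sub_const β) (sub_ne_zero.mpr hne)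

lemma deriv_fst_eq_of_singularCubic (hx : HasDerivAt x x'₀ t)
    (hu : HasDerivAt (fun s ↦ cubicSlope β (x s) (y s)) u' t) (hne : x t ≠ β)
    (h : ∀ᶠ s in 𝓝 t, c * y s ^ 2 = (x s - α) * (x s - β) ^ 2) :
    x'₀ = 2 * c * cubicSlope β (x t) (y t) * u' := by
  have h_param : (fun s ↦ x s - α) =ᶠ[𝓝 t] fun s ↦ c * cubicSlope β (x s) (y s) ^ 2 := by
    filter_upwards [h, hx.continuousAt.eventually_ne hne] with s hs hs_ne
    exact (mul_cubicSlope_sq hs_ne hs).symm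
  have h_deriv := (hx.sub_const α).unique (((hu.pow 2).const_mul c).congr_of_eventuallyEq h_param)
  linear_combination h_deriv

lemma deriv_snd_eq_of_singularCubic (hx : HasDerivAt x x'₀ t) (hy : HasDerivAt y y' t)
    (hu : HasDerivAt (fun s ↦ cubicSlope β (x s) (y s)) u' t) (hne : x t ≠ β)
    (h : ∀ᶠ s in 𝓝 t, c * y s ^ 2 = (x s - α) * (x s - β) ^ 2) :
    y' = (3 * x t - 2 * α - β) * u' := by
  have h_param : y =ᶠ[𝓝 t] fun s ↦ cubicSlope β (x s) (y s) * (x s - β) := by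
    filter_upwards [hx.continuousAt.eventually_ne hne] with s hs_ne
    exact (cubicSlope_mul_sub hs_ne).symm
  have h_deriv := hy.unique ((hu.mul (hx.sub_const β)).congr_of_eventuallyEq h_param)
  have h_fst := deriv_fst_eq_of_singularCubic hx hu hne h
  have h_sq := mul_cubicSlope_sq hne h.self_of_nhds
  linear_combination h_deriv + cubicSlope β (x t) (y t) * h_fst + 2 * u' * h_sq

lemma mul_deriv_fst_eq_of_singularCubic (hx : HasDerivAt x x'₀ t) (hy : HasDerivAt y y' t)
    (hne : x t ≠ β) (h : ∀ᶠ s in 𝓝 t, c * y s ^ 2 = (x s - α) * (x s - β) ^ 2) :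
    (3 * x t - 2 * α - β) * x'₀ = 2 * c * cubicSlope β (x t) (y t) * y' := by
  have hu := (differentiableAt_cubicSlope hx.differentiableAt hy.differentiableAt hne).hasDerivAt
  rw [deriv_snd_eq_of_singularCubic hx hy hu hne h, deriv_fst_eq_of_singularCubic hx hu hne h]
  ring

lemma sq_mul_deriv_fst_sq_of_singularCubic (hx : HasDerivAt x x'₀ t) (hne : x t ≠ β)
    (h : ∀ᶠ s in 𝓝 t, c * (a + s) ^ 2 = (x s - α) * (x s - β) ^ 2) :
    (3 * x t - 2 * α - β) ^ 2 * x'₀ ^ 2 = 4 * c * (x t - α) := by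
  have hy : HasDerivAt (fun s ↦ a + s) 1 t := (hasDerivAt_id t).const_add a
  rw [← mul_pow, mul_deriv_fst_eq_of_singularCubic hx hy hne h,
    ← mul_cubicSlope_sq hne h.self_of_nhds]
  ring

lemma second_deriv_of_singularCubic (hx : ∀ᶠ s in 𝓝 t, HasDerivAt x (x' s) s)
    (hx' : HasDerivAt x' x'' t) (hne : x t ≠ β)
    (h : ∀ᶠ s in 𝓝 t, c * (a + s) ^ 2 = (x s - α) * (x s - β) ^ 2) :
    (3 * x t - 2 * α - β) * (3 * x' t ^ 2 + (3 * x t - 2 * α - β) * x'') = 2 * c := by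
  have hxt := hx.self_of_nhds
  have hy (s : 𝕜) : HasDerivAt (fun r ↦ a + r) 1 s := (hasDerivAt_id s).const_add a
  have hu :=
    (differentiableAt_cubicSlope hxt.differentiableAt (hy t).differentiableAt hne).hasDerivAt
  have h_vel : (fun s ↦ (3 * x s - 2 * α - β) * x' s) =ᶠ[𝓝 t]
      fun s ↦ 2 * c * cubicSlope β (x s) (a + s) := by
    filter_upwards [hx, hxt.continuousAt.eventually_ne hne, h.eventually_nhds]
      with s hs hs_ne hs_cubic
    simpa only [mul_one] using mul_deriv_fst_eq_of_singularCubic hs (hy s) hs_ne hs_cubic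
  have h_lhs := (((hxt.const_mul 3).sub_const (2 * α)).sub_const β).mul hx'
  have h_deriv := h_lhs.unique ((hu.const_mul (2 * c)).congr_of_eventuallyEq h_vel)
  have h_slope := deriv_snd_eq_of_singularCubic hxt (hy t) hu hne h
  linear_combination (3 * x t - 2 * α - β) * h_deriv - 2 * c * h_slope

lemma three_mul_sub_ne_zero_of_singularCubic (hx : HasDerivAt x x'₀ t) (hne : x t ≠ β)
    (h : ∀ᶠ s in 𝓝 t, c * (a + s) ^ 2 = (x s - α) * (x s - β) ^ 2) :
    3 * x t - 2 * α - β ≠ 0 := by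
  have hy : HasDerivAt (fun s ↦ a + s) 1 t := (hasDerivAt_id t).const_add a
  have hu := (differentiableAt_cubicSlope hx.differentiableAt hy.differentiableAt hne).hasDerivAt
  exact left_ne_zero_of_mul_eq_one (deriv_snd_eq_of_singularCubic hx hy hu hne h).symm

theorem ode_of_singularCubic [NeZero (2 : 𝕜)] (hx : ∀ᶠ s in 𝓝 t, HasDerivAt x (x' s) s)
    (hx' : HasDerivAt x' x'' t) (hne : x t ≠ β)
    (h : ∀ᶠ s in 𝓝 t, c * (a + s) ^ 2 = (x s - α) * (x s - β) ^ 2) :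
    x'' + 3 * x' t ^ 2 / (2 * (3 * x t - 2 * α - β)) +
      2 * c * (β - α) / (3 * x t - 2 * α - β) ^ 3 = 0 := by
  have h_ne_zero := three_mul_sub_ne_zero_of_singularCubic hx.self_of_nhds hne h
  have h_first := sq_mul_deriv_fst_sq_of_singularCubic hx.self_of_nhds hne h
  have h_second := second_deriv_of_singularCubic hx hx' hne h
  have h_two : (2 : 𝕜) ≠ 0 := NeZero.ne 2
  field_simp
  linear_combination 2 * (3 * x t - 2 * α - β) * h_second - 3 * h_first

end Calculus

theorem implicit_cubic_solves_ode_general {𝕜 : Type*} [NontriviallyNormedField 𝕜] [CharZero 𝕜]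
    {b c₁ c₂ : 𝕜} (hc₁ : c₁ ≠ 0) {U : Set 𝕜} (hU : IsOpen U) {lam lam' lam'' : 𝕜 → 𝕜}
    (hd1 : ∀ t ∈ U, HasDerivAt lam (lam' t) t)
    (hd2 : ∀ t ∈ U, HasDerivAt lam' (lam'' t) t)
    (hne : ∀ t ∈ U, lam t ≠ 6 * b / c₁)
    (hrel : ∀ t ∈ U,
      (c₂ + t) ^ 2 = (1 / c₁) * (lam t + 3 * b / c₁) * (lam t - 6 * b / c₁) ^ 2) :
    ∀ t ∈ U, lam'' t + (lam' t) ^ 2 / (2 * lam t) + 2 * b / (3 * (lam t) ^ 3) = 0 := by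
  intro t ht
  have hU_nhds := hU.mem_nhds ht
  have h_cubic : ∀ᶠ s in 𝓝 t,
      c₁ * (c₂ + s) ^ 2 = (lam s - -3 * b / c₁) * (lam s - 6 * b / c₁) ^ 2 := by
    filter_upwards [hU_nhds] with s hs
    rw [hrel s hs]
    field_simp
    ring
  have hd1_nhds : ∀ᶠ s in 𝓝 t, HasDerivAt lam (lam' s) s := by
    filter_upwards [hU_nhds] using hd1
  have h_w : 3 * lam t - 2 * (-3 * b / c₁) - 6 * b / c₁ = 3 * lam t := by ring
  have h_w_ne := three_mul_sub_ne_zero_of_singularCubic (hd1 t ht) (hne t ht) h_cubic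
  have h_ode := ode_of_singularCubic hd1_nhds (hd2 t ht) (hne t ht) h_cubic
  rw [h_w] at h_w_ne h_ode
  have h_lam : lam t ≠ 0 := right_ne_zero_of_mul h_w_ne
  rw [← h_ode]
  field_simp
  ring

/-- If `λ` is positive, avoids `6b/c₁`, and satisfies the implicit cubic
relation `(c₂+t)² = (1/c₁)(λ + 3b/c₁)(λ − 6b/c₁)²` on an open interval, then
it solves the ODE `λ″ + λ′²/(2λ) + 2b/(3λ³) = 0` there. -/
theorem implicit_cubic_solves_ode (b c₁ c₂ : ℝ) (hc₁ : c₁ ≠ 0)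
    (p q : ℝ) (lam lam' lam'' : ℝ → ℝ)
    (hd1 : ∀ t ∈ Ioo p q, HasDerivAt lam (lam' t) t)
    (hd2 : ∀ t ∈ Ioo p q, HasDerivAt lam' (lam'' t) t)
    (hpos : ∀ t ∈ Ioo p q, 0 < lam t)
    (hne : ∀ t ∈ Ioo p q, lam t ≠ 6 * b / c₁)
    (hrel : ∀ t ∈ Ioo p q,
      (c₂ + t) ^ 2 = (1 / c₁) * (lam t + 3 * b / c₁) * (lam t - 6 * b / c₁) ^ 2) :
    ∀ t ∈ Ioo p q,
      lam'' t + (lam' t) ^ 2 / (2 * lam t) + 2 * b / (3 * (lam t) ^ 3) = 0 :=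
  implicit_cubic_solves_ode_general hc₁ isOpen_Ioo hd1 hd2 hne hrel
end
end

section
/- Let ψ : (0,∞) × ℝ → ℝ be continuously differentiable and define u on ℝ³ minus the z-axis by u(p) := sin(ψ(ρ, z))·(x, y, 0)/ρ + cos(ψ(ρ, z))·(0,0,1), where p = (x, y, z) and ρ = √(x² + y²) > 0. Then u is differentiable at every such p and the squared Frobenius norm of its Jacobian equals ‖Du(p)‖² = (∂_ρψ(ρ,z))² + (∂_zψ(ρ,z))² + sin²(ψ(ρ,z))/ρ². -/
noncomputable section

open Real

/-- Cylindrical radius `ρ = √(x² + y²)`. -/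
def rad (p : E3) : ℝ := Real.sqrt ((p 0) ^ 2 + (p 1) ^ 2)

/-- The equivariant map `u = sin(ψ(ρ,z)) e_ρ + cos(ψ(ρ,z)) e_z`. -/
def uPsi (ψ : ℝ × ℝ → ℝ) (p : E3) : E3 :=
  toE3 ![Real.sin (ψ (rad p, p 2)) * p 0 / rad p,
         Real.sin (ψ (rad p, p 2)) * p 1 / rad p,
         Real.cos (ψ (rad p, p 2))]

/-! Put `Ψ = ψ(ρ, z)` and `ν = cos(Ψ) e_ρ - sin(Ψ) e_z`. The unit field `e_ρ` turns only in the
direction of `e_θ`, at rate `1/ρ`, so the product rule gives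
`Du = ν ⊗ ∇Ψ + (sin(Ψ)/ρ) e_θ ⊗ e_θ` with `∇Ψ = (∂_ρψ) e_ρ + (∂_zψ) e_z`. As `ν` and `e_θ` are
orthonormal, the two rank-one terms contribute separately to the Frobenius norm:
`‖Du‖² = ‖∇Ψ‖² + ‖(sin(Ψ)/ρ) e_θ‖²`. -/

open scoped InnerProductSpace

open InnerProductSpace (rankOne)

section FrobeniusNorm

variable {𝕜 E F ι κ : Type*} [RCLike 𝕜] [NormedAddCommGroup E] [InnerProductSpace 𝕜 E]
  [NormedAddCommGroup F] [InnerProductSpace 𝕜 F] [Fintype ι] [Fintype κ]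

lemma norm_sq_sum_smul_of_orthonormal {t : κ → F} (ht : Orthonormal 𝕜 t) (c : κ → 𝕜) :
    ‖∑ k, c k • t k‖ ^ 2 = ∑ k, ‖c k‖ ^ 2 := by
  simpa using ht.orthogonalFamily.norm_sum c Finset.univ

lemma sum_norm_sq_sum_rankOne (b : OrthonormalBasis ι 𝕜 E) {t : κ → F} (ht : Orthonormal 𝕜 t)
    (g : κ → E) : ∑ i, ‖(∑ k, rankOne 𝕜 (t k) (g k)) (b i)‖ ^ 2 = ∑ k, ‖g k‖ ^ 2 := by
  calc ∑ i, ‖(∑ k, rankOne 𝕜 (t k) (g k)) (b i)‖ ^ 2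
      = ∑ i, ∑ k, ‖⟪g k, b i⟫_𝕜‖ ^ 2 := by
        simp only [sum_apply, InnerProductSpace.rankOne_apply,
          norm_sq_sum_smul_of_orthonormal ht]
    _ = ∑ k, ∑ i, ‖⟪g k, b i⟫_𝕜‖ ^ 2 := Finset.sum_comm
    _ = ∑ k, ‖g k‖ ^ 2 := by simp only [b.sum_sq_norm_inner_left]

lemma sum_inner_smul_of_orthonormal_of_card_eq_finrank [FiniteDimensional 𝕜 E] {t : ι → E}
    (ht : Orthonormal 𝕜 t) (hcard : Fintype.card ι = Module.finrank 𝕜 E) (x : E) :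
    ∑ i, ⟪t i, x⟫_𝕜 • t i = x := by
  have hspan : ⊤ ≤ Submodule.span 𝕜 (Set.range t) :=
    (ht.linearIndependent.span_eq_top_of_card_eq_finrank' hcard).ge
  simpa using (OrthonormalBasis.mk ht hspan).sum_repr' x

end FrobeniusNorm

lemma frobSq_eq_sum_norm_sq_fderiv (f : E3 → E3) (p : E3) :
    frobSq f p = ∑ j, ‖fderiv ℝ f p (EuclideanSpace.basisFun (Fin 3) ℝ j)‖ ^ 2 := by
  simp only [frobSq, jac, Matrix.of_apply, EuclideanSpace.real_norm_sq_eq,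
    EuclideanSpace.basisFun_apply]
  exact Finset.sum_comm

lemma frobSq_of_hasFDerivAt_sum_rankOne {κ : Type*} [Fintype κ] {f : E3 → E3} {p : E3}
    {t g : κ → E3} (ht : Orthonormal ℝ t) (hf : HasFDerivAt f (∑ k, rankOne ℝ (t k) (g k)) p) :
    frobSq f p = ∑ k, ‖g k‖ ^ 2 := by
  rw [frobSq_eq_sum_norm_sq_fderiv, hf.fderiv, sum_norm_sq_sum_rankOne _ ht]

/-- The radial unit vector `e_ρ` of cylindrical coordinates; it is `0` on the `z`-axis. -/
def eRho (p : E3) : E3 := !₂[p 0 / rad p, p 1 / rad p, 0]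

/-- The angular unit vector `e_θ` of cylindrical coordinates; it is `0` on the `z`-axis. -/
def eTheta (p : E3) : E3 := !₂[-p 1 / rad p, p 0 / rad p, 0]

/-- The vertical unit vector `e_z`. -/
def eZ : E3 := !₂[0, 0, 1]

/-- The derivative `cos(α) e_ρ - sin(α) e_z` in `α` of `sin(α) e_ρ + cos(α) e_z`: the unit tangent
to the meridian circle at polar angle `α`. -/
def eMeridian (α : ℝ) (p : E3) : E3 := cos α • eRho p - sin α • eZ

/-- The gradient `(∂_ρψ) e_ρ + (∂_zψ) e_z` at `p` of the function `ψ(ρ, z)` on `ℝ³`. -/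
def cylGradient (ψ : ℝ × ℝ → ℝ) (p : E3) : E3 :=
  fderiv ℝ ψ (rad p, p 2) (1, 0) • eRho p + fderiv ℝ ψ (rad p, p 2) (0, 1) • eZ

lemma uPsi_eq_sin_smul_add_cos_smul (ψ : ℝ × ℝ → ℝ) (p : E3) :
    uPsi ψ p = sin (ψ (rad p, p 2)) • eRho p + cos (ψ (rad p, p 2)) • eZ := by
  ext i
  fin_cases i <;> simp [uPsi, toE3, eRho, eZ, mul_div_assoc]

lemma rad_sq (p : E3) : rad p ^ 2 = p 0 ^ 2 + p 1 ^ 2 := Real.sq_sqrt (by positivity)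

lemma eRho_eq_inv_rad_smul (p : E3) : eRho p = (rad p)⁻¹ • (p - p 2 • eZ) := by
  ext i
  fin_cases i <;> simp [eRho, eZ, div_eq_inv_mul]

lemma inner_eZ (v : E3) : ⟪eZ, v⟫_ℝ = v 2 := by
  simp [eZ, PiLp.inner_apply, Fin.sum_univ_three]

section OffAxis

variable {p : E3}

lemma rad_pos (hp : 0 < p 0 ^ 2 + p 1 ^ 2) : 0 < rad p := Real.sqrt_pos.mpr hp

lemma orthonormal_eRho_eTheta_eZ (hp : 0 < p 0 ^ 2 + p 1 ^ 2) :
    Orthonormal ℝ ![eRho p, eTheta p, eZ] := by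
  have hr := (rad_pos hp).ne'
  have hunit : (p 0 / rad p) ^ 2 + (p 1 / rad p) ^ 2 = 1 := by
    rw [div_pow, div_pow, ← add_div, ← rad_sq, div_self (pow_ne_zero 2 hr)]
  have hρ : ‖eRho p‖ = 1 := by
    simpa [eRho, EuclideanSpace.norm_eq, Fin.sum_univ_three] using hunit
  have hθ : ‖eTheta p‖ = 1 := by
    simpa [eTheta, EuclideanSpace.norm_eq, Fin.sum_univ_three, neg_div, add_comm] using hunit
  have hz : ‖eZ‖ = 1 := by simp [eZ, EuclideanSpace.norm_eq, Fin.sum_univ_three]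
  have hρθ : ⟪eRho p, eTheta p⟫_ℝ = 0 := by
    simp [eRho, eTheta, PiLp.inner_apply, Fin.sum_univ_three, neg_div, mul_comm]
  have hρz : ⟪eRho p, eZ⟫_ℝ = 0 := by
    simp [eRho, eZ, PiLp.inner_apply, Fin.sum_univ_three]
  have hθz : ⟪eTheta p, eZ⟫_ℝ = 0 := by
    simp [eTheta, eZ, PiLp.inner_apply, Fin.sum_univ_three]
  simp [Fin.forall_fin_succ, hρ, hθ, hz, hρθ, hρz, hθz]

lemma norm_sq_smul_eRho_add_smul_eZ (hp : 0 < p 0 ^ 2 + p 1 ^ 2) (a b : ℝ) :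
    ‖a • eRho p + b • eZ‖ ^ 2 = a ^ 2 + b ^ 2 := by
  simpa [Fin.sum_univ_three] using
    norm_sq_sum_smul_of_orthonormal (orthonormal_eRho_eTheta_eZ hp) ![a, 0, b]

lemma orthonormal_eMeridian_eTheta (hp : 0 < p 0 ^ 2 + p 1 ^ 2) (α : ℝ) :
    Orthonormal ℝ ![eMeridian α p, eTheta p] := by
  have hframe := orthonormal_eRho_eTheta_eZ hp
  have hθ : ‖eTheta p‖ = 1 := hframe.norm_eq_one 1
  have hρθ : ⟪eRho p, eTheta p⟫_ℝ = 0 := hframe.inner_eq_zero (i := 0) (j := 1) (by decide)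
  have hzθ : ⟪eZ, eTheta p⟫_ℝ = 0 := hframe.inner_eq_zero (i := 2) (j := 1) (by decide)
  have hν : ‖eMeridian α p‖ = 1 := by
    rw [← pow_eq_one_iff_of_nonneg (norm_nonneg _) two_ne_zero, eMeridian, sub_eq_add_neg,
      ← neg_smul, norm_sq_smul_eRho_add_smul_eZ hp, neg_sq, cos_sq_add_sin_sq]
  have hνθ : ⟪eMeridian α p, eTheta p⟫_ℝ = 0 := by
    rw [eMeridian, inner_sub_left, real_inner_smul_left, real_inner_smul_left, hρθ, hzθ,
      mul_zero, mul_zero, sub_zero]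
  simp [hν, hθ, hνθ]

lemma inner_smul_eRho_add_eTheta_add_eZ (hp : 0 < p 0 ^ 2 + p 1 ^ 2) (v : E3) :
    ⟪eRho p, v⟫_ℝ • eRho p + ⟪eTheta p, v⟫_ℝ • eTheta p + v 2 • eZ = v := by
  simpa [Fin.sum_univ_three, inner_eZ] using
    sum_inner_smul_of_orthonormal_of_card_eq_finrank (orthonormal_eRho_eTheta_eZ hp)
      (by simp) v

lemma hasGradientAt_rad (hp : 0 < p 0 ^ 2 + p 1 ^ 2) : HasGradientAt rad (eRho p) p := by
  have hsq := ((PiLp.hasFDerivAt_apply (𝕜 := ℝ) 2 p 0).pow 2).add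
    ((PiLp.hasFDerivAt_apply (𝕜 := ℝ) 2 p 1).pow 2)
  refine (hsq.sqrt hp.ne').congr_fderiv ?_
  ext v
  suffices 1 / (2 * rad p) * (2 * p 0 * v 0 + 2 * p 1 * v 1) =
      p 0 / rad p * v 0 + p 1 / rad p * v 1 by
    simpa [eRho, PiLp.inner_apply, Fin.sum_univ_three, rad, mul_add, mul_comm] using this
  field_simp

lemma hasFDerivAt_eRho (hp : 0 < p 0 ^ 2 + p 1 ^ 2) :
    HasFDerivAt eRho ((rad p)⁻¹ • rankOne ℝ (eTheta p) (eTheta p)) p := by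
  have hr := (rad_pos hp).ne'
  have hinv := (hasDerivAt_inv hr).comp_hasFDerivAt p (hasGradientAt_rad hp).hasFDerivAt
  have hhor := (hasFDerivAt_id p).sub ((PiLp.hasFDerivAt_apply (𝕜 := ℝ) 2 p 2).smul_const eZ)
  rw [funext eRho_eq_inv_rad_smul]
  refine (hinv.smul hhor).congr_fderiv ?_
  ext1 v
  have hp_hor : p - p 2 • eZ = rad p • eRho p := by rw [eRho_eq_inv_rad_smul, smul_inv_smul₀ hr]
  have hv_hor : v - v 2 • eZ = ⟪eRho p, v⟫_ℝ • eRho p + ⟪eTheta p, v⟫_ℝ • eTheta p := by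
    rw [sub_eq_iff_eq_add, inner_smul_eRho_add_eTheta_add_eZ hp]
  suffices (rad p)⁻¹ • (v - v 2 • eZ) + (-(rad p ^ 2)⁻¹ * ⟪eRho p, v⟫_ℝ) • (p - p 2 • eZ) =
      (rad p)⁻¹ • ⟪eTheta p, v⟫_ℝ • eTheta p by simpa
  rw [hp_hor, hv_hor]
  match_scalars <;> field_simp
  ring

lemma hasGradientAt_comp_rad_coord (hp : 0 < p 0 ^ 2 + p 1 ^ 2) {ψ : ℝ × ℝ → ℝ}
    (hψ : DifferentiableAt ℝ ψ (rad p, p 2)) :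
    HasGradientAt (fun q : E3 ↦ ψ (rad q, q 2)) (cylGradient ψ p) p := by
  have hcyl := (hasGradientAt_rad hp).hasFDerivAt.prodMk (PiLp.hasFDerivAt_apply (𝕜 := ℝ) 2 p 2)
  refine (hψ.hasFDerivAt.comp (f := fun q : E3 ↦ (rad q, q 2)) p hcyl).congr_fderiv ?_
  ext v
  calc fderiv ℝ ψ (rad p, p 2) (⟪eRho p, v⟫_ℝ, v 2)
      = fderiv ℝ ψ (rad p, p 2) (⟪eRho p, v⟫_ℝ • (1, 0) + v 2 • (0, 1)) := by simp
    _ = ⟪cylGradient ψ p, v⟫_ℝ := by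
        rw [map_add, map_smul, map_smul, cylGradient, inner_add_left, real_inner_smul_left,
          real_inner_smul_left, inner_eZ, smul_eq_mul, smul_eq_mul, mul_comm, mul_comm (v 2)]

lemma hasFDerivAt_uPsi (hp : 0 < p 0 ^ 2 + p 1 ^ 2) {ψ : ℝ × ℝ → ℝ}
    (hψ : DifferentiableAt ℝ ψ (rad p, p 2)) :
    HasFDerivAt (uPsi ψ)
      (rankOne ℝ (eMeridian (ψ (rad p, p 2)) p) (cylGradient ψ p) +
        rankOne ℝ (eTheta p) ((sin (ψ (rad p, p 2)) / rad p) • eTheta p)) p := by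
  have hΨ := (hasGradientAt_comp_rad_coord hp hψ).hasFDerivAt
  rw [funext (uPsi_eq_sin_smul_add_cos_smul ψ)]
  refine ((hΨ.sin.smul (hasFDerivAt_eRho hp)).add (hΨ.cos.smul_const eZ)).congr_fderiv ?_
  ext1 v
  simp only [eMeridian, add_apply, smul_apply, InnerProductSpace.rankOne_apply,
    ContinuousLinearMap.smulRight_apply, InnerProductSpace.toDual_apply_apply,
    real_inner_smul_left, smul_eq_mul]
  module

end OffAxis

theorem frobSq_equivariant_profile_general (ψ : ℝ × ℝ → ℝ) (p : E3)
    (hp : 0 < p 0 ^ 2 + p 1 ^ 2) (hψ : DifferentiableAt ℝ ψ (rad p, p 2)) :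
    DifferentiableAt ℝ (uPsi ψ) p ∧
      frobSq (uPsi ψ) p =
        (fderiv ℝ ψ (rad p, p 2) (1, 0)) ^ 2 +
          (fderiv ℝ ψ (rad p, p 2) (0, 1)) ^ 2 +
          Real.sin (ψ (rad p, p 2)) ^ 2 / rad p ^ 2 := by
  set α := ψ (rad p, p 2)
  have hDu := hasFDerivAt_uPsi hp hψ
  have hframe := orthonormal_eMeridian_eTheta hp α
  have hθ : ‖eTheta p‖ = 1 := hframe.norm_eq_one 1
  refine ⟨hDu.differentiableAt, ?_⟩
  calc frobSq (uPsi ψ) p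
      = ‖cylGradient ψ p‖ ^ 2 + ‖(sin α / rad p) • eTheta p‖ ^ 2 := by
        simpa using frobSq_of_hasFDerivAt_sum_rankOne
          (g := ![cylGradient ψ p, (sin α / rad p) • eTheta p]) hframe (by simpa using hDu)
    _ = fderiv ℝ ψ (rad p, p 2) (1, 0) ^ 2 + fderiv ℝ ψ (rad p, p 2) (0, 1) ^ 2 +
          sin α ^ 2 / rad p ^ 2 := by
        rw [cylGradient, norm_sq_smul_eRho_add_smul_eZ hp, norm_smul, hθ, mul_one,
          Real.norm_eq_abs, sq_abs, div_pow]

/-- For `ψ : (0,∞) × ℝ → ℝ` continuously differentiable, the map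
`u = sin(ψ(ρ,z)) e_ρ + cos(ψ(ρ,z)) e_z` is differentiable off the `z`-axis and
`‖Du‖² = (∂_ρψ)² + (∂_zψ)² + sin²(ψ)/ρ²`. -/
theorem frobSq_equivariant_profile (ψ : ℝ × ℝ → ℝ)
    (hψ : ContDiffOn ℝ 1 ψ (Set.Ioi 0 ×ˢ (Set.univ : Set ℝ))) :
    ∀ p : E3, 0 < (p 0) ^ 2 + (p 1) ^ 2 →
      DifferentiableAt ℝ (uPsi ψ) p ∧
      frobSq (uPsi ψ) p =
        (fderiv ℝ ψ (rad p, p 2) (1, 0)) ^ 2 +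
          (fderiv ℝ ψ (rad p, p 2) (0, 1)) ^ 2 +
          Real.sin (ψ (rad p, p 2)) ^ 2 / rad p ^ 2 := by
  intro p hp
  have hmem : Set.Ioi (0 : ℝ) ×ˢ Set.univ ∈ nhds (rad p, p 2) :=
    (isOpen_Ioi.prod isOpen_univ).mem_nhds ⟨rad_pos hp, trivial⟩
  exact frobSq_equivariant_profile_general ψ p hp
    ((hψ.contDiffAt hmem).differentiableAt one_ne_zero)
end
end
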